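/- There exists a constant C > 0 such that for every real ε > 0 and every positive integer k with πεk ≤ 1/4, writing K_j = K_j(πεk), the tangential Stokes slender-body PDE eigenvalue λᵗ = 4π²εk·K₁² / (2K₀K₁ + πεk·(K₀² − K₁²)) and the tangential slender-body approximation eigenvalue λ^{SB,t} = −4π/(1 + 2·log(πεk/2) + 2γ) satisfy |λᵗ − λ^{SB,t}| ≤ C·ε²·k². -/

import Mathlib

/-!
Put `z = πεk`, `a = z K₁(z)`, `K = K₀(z)` and `L = -(log (z / 2) + γ)`. The two eigenvalues are
`4π a² / (2Ka + z²K² - a²)` and `4π / (2L - 1)`; they coincide when `a = 1`, `K = L` and the term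
`z²K²` is dropped. As both denominators are at least of the order of `L`, it suffices that `1 - a`
is `O(z²L)` and `K - L` is `O(z²L²)`.

Since `K₀' = -K₁` and `(z K₁)' = -z K₀`, each of these two errors controls the derivative of the
other, and both tend to `0` as `z → 0⁺`; hence a crude bound on one improves, after integration
from `0`, to a better bound on the other. Starting from `1 - z ≤ a ≤ 1` this yields
`L ≤ K ≤ L + z`, then `1 - z²L ≤ a`, and finally `K ≤ L + z²L`.

That `K - L → 0` follows by comparing `2 cosh t` with `exp t` in the integral for `K₀`, which gives
the exponential integral `E₁(z / 2)`. Integrating by parts there splits off the logarithm, and `γ`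
enters as `-Γ'(1) = -∫₀^∞ log x e⁻ˣ dx`.
-/

open Real

/-- Modified Bessel function of the second kind of order `j`:
`K_j(z) = ∫₀^∞ exp (−z cosh t) * cosh (j t) dt`. -/
noncomputable def besselK (j : ℕ) (z : ℝ) : ℝ :=
  ∫ t in Set.Ioi (0 : ℝ), Real.exp (-z * Real.cosh t) * Real.cosh ((j : ℝ) * t)

open MeasureTheory Set Filter Topology

/-! ### Integral representation of `K_j` -/

lemma exp_neg_mul_cosh_mul_cosh_le (ν : ℝ) {z t : ℝ} (hz : 0 < z) (ht : 0 ≤ t) :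
    exp (-z * cosh t) * cosh (ν * t) ≤ exp ((|ν| + 1) ^ 2 / z) * exp (-t) := by
  have hcosh : cosh (ν * t) ≤ exp (|ν| * t) := by
    rw [← cosh_abs, abs_mul, abs_of_nonneg ht, ← cosh_add_sinh]
    exact le_add_of_nonneg_right (sinh_nonneg_iff.2 (by positivity))
  have hquad : t ^ 2 / 4 ≤ cosh t := by
    rw [cosh_eq]
    linarith [quadratic_le_exp_of_nonneg ht, exp_pos (-t)]
  have hsq : (|ν| + 1) * t ≤ z * (t ^ 2 / 4) + (|ν| + 1) ^ 2 / z := by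
    have : z * (t ^ 2 / 4) + (|ν| + 1) ^ 2 / z - (|ν| + 1) * t =
        (z * t - 2 * (|ν| + 1)) ^ 2 / (4 * z) := by
      field_simp
      ring
    have : 0 ≤ (z * t - 2 * (|ν| + 1)) ^ 2 / (4 * z) := by positivity
    linarith
  calc exp (-z * cosh t) * cosh (ν * t) ≤ exp (-z * cosh t) * exp (|ν| * t) := by gcongr
    _ = exp (-z * cosh t + |ν| * t) := (exp_add _ _).symm
    _ ≤ exp ((|ν| + 1) ^ 2 / z + -t) :=
      exp_le_exp.2 (by linarith [mul_le_mul_of_nonneg_left hquad hz.le])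
    _ = exp ((|ν| + 1) ^ 2 / z) * exp (-t) := exp_add _ _

lemma integrableOn_exp_neg_mul_cosh_mul_cosh (ν : ℝ) {z : ℝ} (hz : 0 < z) :
    IntegrableOn (fun t => exp (-z * cosh t) * cosh (ν * t)) (Ioi 0) := by
  refine ((integrableOn_exp_neg_Ioi 0).const_mul (exp ((|ν| + 1) ^ 2 / z))).mono'
    (Continuous.aestronglyMeasurable (by fun_prop)) ?_
  filter_upwards [ae_restrict_mem measurableSet_Ioi] with t ht
  rw [norm_of_nonneg (mul_pos (exp_pos _) (cosh_pos _)).le]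
  exact exp_neg_mul_cosh_mul_cosh_le ν hz (le_of_lt ht)

lemma tendsto_exp_neg_mul_cosh_mul_cosh_atTop (ν : ℝ) {z : ℝ} (hz : 0 < z) :
    Tendsto (fun t => exp (-z * cosh t) * cosh (ν * t)) atTop (𝓝 0) := by
  refine squeeze_zero' (Eventually.of_forall fun t => (mul_pos (exp_pos _) (cosh_pos _)).le)
    ((eventually_ge_atTop 0).mono fun t => exp_neg_mul_cosh_mul_cosh_le ν hz) ?_
  simpa using tendsto_exp_neg_atTop_nhds_zero.const_mul (exp ((|ν| + 1) ^ 2 / z))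

lemma cosh_mul_mul_cosh (ν t : ℝ) :
    cosh (ν * t) * cosh t = (cosh ((ν - 1) * t) + cosh ((ν + 1) * t)) / 2 := by
  rw [sub_mul, add_mul, one_mul, cosh_sub, cosh_add]
  ring

lemma sinh_mul_mul_sinh (ν t : ℝ) :
    sinh (ν * t) * sinh t = (cosh ((ν + 1) * t) - cosh ((ν - 1) * t)) / 2 := by
  rw [sub_mul, add_mul, one_mul, cosh_sub, cosh_add]
  ring

lemma integrableOn_exp_neg_mul_cosh_mul_cosh_mul_cosh (ν : ℝ) {z : ℝ} (hz : 0 < z) :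
    IntegrableOn (fun t => exp (-z * cosh t) * (cosh (ν * t) * cosh t)) (Ioi 0) := by
  have h := ((integrableOn_exp_neg_mul_cosh_mul_cosh (ν - 1) hz).add
    (integrableOn_exp_neg_mul_cosh_mul_cosh (ν + 1) hz)).div_const 2
  refine h.congr (Eventually.of_forall fun t => ?_)
  simp only [Pi.add_apply, cosh_mul_mul_cosh]
  ring

lemma hasDerivAt_exp_neg_mul_cosh (z t : ℝ) :
    HasDerivAt (fun t => exp (-z * cosh t)) (-(z * sinh t * exp (-z * cosh t))) t :=
  ((hasDerivAt_cosh t).const_mul (-z)).exp.congr_deriv (by ring)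

lemma besselK_nonneg (j : ℕ) (z : ℝ) : 0 ≤ besselK j z :=
  integral_nonneg fun _ => (mul_pos (exp_pos _) (cosh_pos _)).le

/-! ### Derivatives and recurrence -/

lemma hasDerivAt_besselK (j : ℕ) {z : ℝ} (hz : 0 < z) :
    HasDerivAt (besselK j)
      (-∫ t in Ioi (0 : ℝ), exp (-z * cosh t) * (cosh (j * t) * cosh t)) z := by
  rw [← integral_neg]
  refine (hasDerivAt_integral_of_dominated_loc_of_deriv_le
    (μ := volume.restrict (Ioi 0))
    (F := fun x t => exp (-x * cosh t) * cosh (j * t))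
    (F' := fun x t => -(exp (-x * cosh t) * (cosh (j * t) * cosh t)))
    (bound := fun t => exp (-(z / 2) * cosh t) * (cosh (j * t) * cosh t))
    (Ioi_mem_nhds (half_lt_self hz))
    (Eventually.of_forall fun x => Continuous.aestronglyMeasurable (by fun_prop))
    (integrableOn_exp_neg_mul_cosh_mul_cosh j hz)
    (Continuous.aestronglyMeasurable (by fun_prop))
    (Eventually.of_forall fun t x hx => ?_)
    (integrableOn_exp_neg_mul_cosh_mul_cosh_mul_cosh j (half_pos hz))
    (Eventually.of_forall fun t x _ => ?_)).2
  · have hprod : 0 < cosh (j * t) * cosh t := mul_pos (cosh_pos _) (cosh_pos _)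
    rw [norm_neg, norm_of_nonneg (mul_pos (exp_pos _) hprod).le]
    have := cosh_pos t
    gcongr
    exact le_of_lt hx
  · have hexp := ((hasDerivAt_id x).neg.mul_const (cosh t)).exp
    exact (hexp.mul_const (cosh (j * t))).congr_deriv (by simp only [Pi.neg_apply, id]; ring)

lemma hasDerivAt_besselK_zero {z : ℝ} (hz : 0 < z) :
    HasDerivAt (besselK 0) (-besselK 1 z) z := by
  simpa [besselK] using hasDerivAt_besselK 0 hz

lemma hasDerivAt_besselK_succ (j : ℕ) {z : ℝ} (hz : 0 < z) :
    HasDerivAt (besselK (j + 1)) (-((besselK j z + besselK (j + 2) z) / 2)) z := by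
  refine (hasDerivAt_besselK (j + 1) hz).congr_deriv (congrArg _ ?_)
  unfold besselK
  rw [← integral_add (integrableOn_exp_neg_mul_cosh_mul_cosh j hz)
    (integrableOn_exp_neg_mul_cosh_mul_cosh (j + 2 : ℕ) hz), ← integral_div]
  congr 1 with t
  rw [cosh_mul_mul_cosh]
  push_cast
  ring_nf

lemma mul_besselK_add_two_sub (j : ℕ) {z : ℝ} (hz : 0 < z) :
    z * (besselK (j + 2) z - besselK j z) = 2 * (j + 1) * besselK (j + 1) z := by
  have hint₀ := integrableOn_exp_neg_mul_cosh_mul_cosh j hz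
  have hint₁ := integrableOn_exp_neg_mul_cosh_mul_cosh (j + 1 : ℕ) hz
  have hint₂ := integrableOn_exp_neg_mul_cosh_mul_cosh (j + 2 : ℕ) hz
  have hderiv : ∀ t ∈ Ici (0 : ℝ),
      HasDerivAt (fun t => sinh ((j + 1 : ℕ) * t) * exp (-z * cosh t))
        ((j + 1) * (exp (-z * cosh t) * cosh ((j + 1 : ℕ) * t)) -
          z / 2 * (exp (-z * cosh t) * cosh ((j + 2 : ℕ) * t) -
            exp (-z * cosh t) * cosh (j * t))) t := by
    intro t _
    have hsinh := ((hasDerivAt_id t).const_mul ((j + 1 : ℕ) : ℝ)).sinh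
    refine (hsinh.mul (hasDerivAt_exp_neg_mul_cosh z t)).congr_deriv ?_
    have hprod : sinh ((j + 1 : ℕ) * t) * sinh t =
        (cosh ((j + 2 : ℕ) * t) - cosh (j * t)) / 2 := by
      rw [sinh_mul_mul_sinh]
      push_cast
      ring_nf
    simp only [id, Nat.cast_succ j] at hprod ⊢
    linear_combination -z * exp (-z * cosh t) * hprod
  have hlim : Tendsto (fun t => sinh ((j + 1 : ℕ) * t) * exp (-z * cosh t)) atTop (𝓝 0) := by
    refine squeeze_zero_norm (fun t => ?_)
      (tendsto_exp_neg_mul_cosh_mul_cosh_atTop (j + 1 : ℕ) hz)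
    rw [norm_mul, norm_of_nonneg (exp_pos _).le, mul_comm, norm_eq_abs, abs_sinh,
      ← cosh_abs ((j + 1 : ℕ) * t)]
    gcongr
    exact (sinh_lt_cosh _).le
  have hdiff : IntegrableOn (fun t => z / 2 * (exp (-z * cosh t) * cosh ((j + 2 : ℕ) * t) -
      exp (-z * cosh t) * cosh (j * t))) (Ioi 0) := (hint₂.sub hint₀).const_mul _
  have hparts := integral_Ioi_of_hasDerivAt_of_tendsto' hderiv ((hint₁.const_mul _).sub hdiff) hlim
  rw [integral_sub (hint₁.const_mul _) hdiff, integral_const_mul, integral_const_mul,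
    integral_sub hint₂ hint₀, mul_zero, sinh_zero, zero_mul, sub_zero] at hparts
  unfold besselK
  linear_combination -2 * hparts

lemma hasDerivAt_pow_mul_besselK_succ (j : ℕ) {z : ℝ} (hz : 0 < z) :
    HasDerivAt (fun z => z ^ (j + 1) * besselK (j + 1) z) (-(z ^ (j + 1) * besselK j z)) z := by
  refine ((hasDerivAt_pow (j + 1) z).mul (hasDerivAt_besselK_succ j hz)).congr_deriv ?_
  rw [Nat.add_sub_cancel]
  push_cast
  linear_combination -z ^ j / 2 * mul_besselK_add_two_sub j hz

lemma hasDerivAt_mul_besselK_one {z : ℝ} (hz : 0 < z) :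
    HasDerivAt (fun z => z * besselK 1 z) (-(z * besselK 0 z)) z := by
  simpa using hasDerivAt_pow_mul_besselK_succ 0 hz

/-! ### The exponential integral near zero -/

/-- The exponential integral `E₁(w) = ∫_w^∞ e^{-x} / x dx`, whose logarithmic singularity at `0`
is transferred to `K₀`. Meaningful for `0 < w` only. -/
noncomputable def expIntegralE₁ (w : ℝ) : ℝ := ∫ x in Ioi w, exp (-x) / x

lemma integrableOn_exp_neg_div {w : ℝ} (hw : 0 < w) :
    IntegrableOn (fun x => exp (-x) / x) (Ioi w) := by
  refine ((integrableOn_exp_neg_Ioi w).const_mul w⁻¹).mono'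
    (Measurable.aestronglyMeasurable (by fun_prop)) ?_
  filter_upwards [ae_restrict_mem measurableSet_Ioi] with x hx
  have hwx : w < x := hx
  have hx0 : 0 < x := hw.trans hwx
  rw [norm_of_nonneg (by positivity), div_eq_inv_mul]
  gcongr

lemma exp_neg_mul_exp_eq {w : ℝ} (hw : w ≠ 0) (t : ℝ) :
    exp (-w * exp t) = exp t • (w * (exp (-(w * exp t)) / (w * exp t))) := by
  rw [smul_eq_mul, neg_mul]
  field_simp

lemma integrableOn_exp_neg_mul_exp {w : ℝ} (hw : 0 < w) :
    IntegrableOn (fun t => exp (-w * exp t)) (Ioi 0) := by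
  simp_rw [exp_neg_mul_exp_eq hw.ne']
  rw [integrableOn_comp_exp_Ioi (fun y => w * (exp (-(w * y)) / (w * y))), exp_zero]
  refine Integrable.const_mul ?_ w
  rw [← IntegrableOn, integrableOn_Ioi_comp_mul_left_iff (fun x => exp (-x) / x) 1 hw, mul_one]
  exact integrableOn_exp_neg_div hw

lemma integral_exp_neg_mul_exp {w : ℝ} (hw : 0 < w) :
    ∫ t in Ioi (0 : ℝ), exp (-w * exp t) = expIntegralE₁ w := by
  simp_rw [exp_neg_mul_exp_eq hw.ne']
  rw [integral_comp_exp_Ioi (fun y => w * (exp (-(w * y)) / (w * y))), exp_zero,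
    integral_const_mul, ← smul_eq_mul, integral_comp_mul_left_Ioi' (fun x => exp (-x) / x) 1 hw,
    mul_one, expIntegralE₁]

lemma integrableOn_log_mul_exp_neg :
    IntegrableOn (fun x => log x * exp (-x)) (Ioi 0) := by
  have hcont : Continuous fun x : ℝ => (exp (-x) : ℂ) := by fun_prop
  have hmellin : MellinConvergent (fun x : ℝ => log x • (exp (-x) : ℂ)) 1 := by
    refine (mellin_hasDerivAt_of_isBigO_rpow (a := 2) (b := 0)
      (hcont.continuousOn.locallyIntegrableOn measurableSet_Ioi) ?_ (by simp) ?_ (by simp)).1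
    · rw [← Asymptotics.isBigO_norm_left]
      simp_rw [Complex.norm_real, Asymptotics.isBigO_norm_left]
      simpa using (isLittleO_exp_neg_mul_rpow_atTop zero_lt_one (-2)).isBigO
    · simp_rw [neg_zero, rpow_zero]
      exact (hcont.tendsto 0).mono_left nhdsWithin_le_nhds |>.isBigO_one ℝ
  rw [MellinConvergent] at hmellin
  simpa [IntegrableOn, ← Complex.ofReal_mul, -Complex.ofReal_exp] using hmellin.re

lemma integral_log_mul_exp_neg :
    ∫ x in Ioi (0 : ℝ), log x * exp (-x) = -eulerMascheroniConstant := by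
  have hGamma : Complex.Gamma =ᶠ[𝓝 1] Complex.GammaIntegral := by
    have hopen : IsOpen {s : ℂ | 0 < s.re} := isOpen_Ioi.preimage Complex.continuous_re
    filter_upwards [hopen.mem_nhds (show (1 : ℂ) ∈ _ by simp)] with s hs
    exact Complex.Gamma_eq_integral hs
  have hderiv := (Complex.hasDerivAt_GammaIntegral (s := 1) (by simp)).congr_of_eventuallyEq hGamma
  have heq := hderiv.unique Complex.hasDerivAt_Gamma_one
  simp only [sub_self, Complex.cpow_zero, one_mul, ← Complex.ofReal_mul,
    integral_complex_ofReal] at heq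
  exact_mod_cast heq

lemma tendsto_log_mul_exp_neg_atTop : Tendsto (fun x => log x * exp (-x)) atTop (𝓝 0) := by
  have h := isLittleO_log_id_atTop.isBigO.mul (Asymptotics.isBigO_refl (fun x => exp (-x)) atTop)
  exact h.trans_tendsto (by simpa using tendsto_pow_mul_exp_neg_atTop_nhds_zero 1)

lemma expIntegralE₁_eq {w : ℝ} (hw : 0 < w) :
    expIntegralE₁ w = -(log w * exp (-w)) + ∫ x in Ioi w, log x * exp (-x) := by
  have hdiv := integrableOn_exp_neg_div hw
  have hlog : IntegrableOn (fun x => log x * exp (-x)) (Ioi w) :=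
    integrableOn_log_mul_exp_neg.mono_set (Ioi_subset_Ioi hw.le)
  have hderiv : ∀ x ∈ Ici w, HasDerivAt (fun x => log x * exp (-x))
      (exp (-x) / x - log x * exp (-x)) x := fun x hx =>
    ((hasDerivAt_log (hw.trans_le hx).ne').mul (hasDerivAt_neg x).exp).congr_deriv (by ring)
  have hparts := integral_Ioi_of_hasDerivAt_of_tendsto' hderiv (hdiv.sub hlog)
    tendsto_log_mul_exp_neg_atTop
  rw [integral_sub hdiv hlog] at hparts
  rw [expIntegralE₁]
  linarith

lemma tendsto_log_mul_one_sub_exp_neg :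
    Tendsto (fun x => log x * (1 - exp (-x))) (𝓝[>] 0) (𝓝 0) := by
  have hlog : Tendsto (fun x => log x * x) (𝓝[>] 0) (𝓝 0) := by
    simpa using tendsto_log_mul_rpow_nhdsGT_zero one_pos
  refine squeeze_zero_norm' ?_ (tendsto_norm_zero.comp hlog)
  filter_upwards [self_mem_nhdsWithin] with x hx
  have hx : 0 < x := hx
  have hexp : exp (-x) ≤ 1 := exp_le_one_iff.2 (by linarith)
  rw [Function.comp_apply, norm_mul, norm_mul, norm_of_nonneg (sub_nonneg.2 hexp),
    norm_of_nonneg hx.le]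
  gcongr
  linarith [one_sub_le_exp_neg x]

lemma tendsto_expIntegralE₁_add_log :
    Tendsto (fun w => expIntegralE₁ w + log w) (𝓝[>] 0) (𝓝 (-eulerMascheroniConstant)) := by
  have htail : Tendsto (fun w => ∫ x in Ioi w, log x * exp (-x)) (𝓝[>] 0)
      (𝓝 (-eulerMascheroniConstant)) := by
    rw [← integral_log_mul_exp_neg]
    exact integrableOn_log_mul_exp_neg.continuousWithinAt_Ici_primitive_Ioi.mono_left
      (nhdsWithin_mono 0 Ioi_subset_Ici_self)
  have hsum := tendsto_log_mul_one_sub_exp_neg.add htail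
  rw [zero_add] at hsum
  refine hsum.congr' ?_
  filter_upwards [self_mem_nhdsWithin] with w hw
  rw [expIntegralE₁_eq hw]
  ring

/-! ### Behaviour of `K₀` and `K₁` near zero -/

lemma neg_mul_cosh_eq (z t : ℝ) :
    -z * cosh t = -(z / 2) * exp t + -(z / 2 * exp (-t)) := by
  rw [cosh_eq]
  ring

lemma besselK_zero_le_expIntegralE₁ {z : ℝ} (hz : 0 < z) :
    besselK 0 z ≤ expIntegralE₁ (z / 2) := by
  rw [← integral_exp_neg_mul_exp (half_pos hz)]
  refine integral_mono (integrableOn_exp_neg_mul_cosh_mul_cosh (0 : ℕ) hz)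
    (integrableOn_exp_neg_mul_exp (half_pos hz)) fun t => ?_
  simp only [Nat.cast_zero, zero_mul, cosh_zero, mul_one, neg_mul_cosh_eq]
  gcongr
  exact add_le_of_nonpos_right (neg_nonpos.2 (by positivity))

lemma expIntegralE₁_sub_le_besselK_zero {z : ℝ} (hz : 0 < z) :
    expIntegralE₁ (z / 2) - z / 2 ≤ besselK 0 z := by
  have hK := integrableOn_exp_neg_mul_cosh_mul_cosh (0 : ℕ) hz
  have hE := integrableOn_exp_neg_mul_exp (half_pos hz)
  have hexp := (integrableOn_exp_neg_Ioi 0).const_mul (z / 2)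
  suffices h : expIntegralE₁ (z / 2) ≤
      ∫ t in Ioi (0 : ℝ), (exp (-z * cosh t) * cosh ((0 : ℕ) * t) + z / 2 * exp (-t)) by
    rw [integral_add hK hexp, integral_const_mul, integral_exp_neg_Ioi_zero, mul_one] at h
    exact sub_le_iff_le_add.2 h
  rw [← integral_exp_neg_mul_exp (half_pos hz)]
  refine integral_mono hE (hK.add hexp) fun t => ?_
  simp only [Nat.cast_zero, zero_mul, cosh_zero, mul_one, neg_mul_cosh_eq, exp_add]
  have hle : exp (-(z / 2) * exp t) ≤ 1 := exp_le_one_iff.2 (by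
    rw [neg_mul]; exact neg_nonpos.2 (by positivity))
  have hlin := one_sub_le_exp_neg (z / 2 * exp (-t))
  have hpos : 0 ≤ z / 2 * exp (-t) := by positivity
  nlinarith [exp_pos (-(z / 2) * exp t)]

/-- The leading part `-(log (z / 2) + γ)` of `K₀(z)` as `z → 0⁺`. -/
noncomputable def besselKZeroLeading (z : ℝ) : ℝ := -(log (z / 2) + eulerMascheroniConstant)

lemma tendsto_besselK_zero_sub_leading :
    Tendsto (fun z => besselK 0 z - besselKZeroLeading z) (𝓝[>] 0) (𝓝 0) := by
  have hid : Tendsto (fun z : ℝ => z / 2) (𝓝[>] 0) (𝓝 0) :=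
    (Continuous.tendsto' (by fun_prop) 0 0 (by simp)).mono_left nhdsWithin_le_nhds
  have hhalf : Tendsto (fun z : ℝ => z / 2) (𝓝[>] 0) (𝓝[>] 0) :=
    tendsto_nhdsWithin_iff.2
      ⟨hid, eventually_mem_nhdsWithin.mono fun _ hz => mem_Ioi.2 (half_pos hz)⟩
  have hupper := (tendsto_expIntegralE₁_add_log.comp hhalf).add_const eulerMascheroniConstant
  have hlower := hupper.sub hid
  rw [neg_add_cancel] at hupper hlower
  rw [sub_zero] at hlower
  refine tendsto_of_tendsto_of_tendsto_of_le_of_le' hlower hupper ?_ ?_ <;>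
    filter_upwards [self_mem_nhdsWithin] with z hz <;>
    simp only [Function.comp_apply, besselKZeroLeading]
  · linarith [expIntegralE₁_sub_le_besselK_zero hz]
  · linarith [besselK_zero_le_expIntegralE₁ hz]

lemma integrableOn_mul_sinh_mul_exp_neg_mul_cosh {z : ℝ} (hz : 0 < z) :
    IntegrableOn (fun t => z * sinh t * exp (-z * cosh t)) (Ioi 0) := by
  refine ((integrableOn_exp_neg_mul_cosh_mul_cosh 1 hz).const_mul z).mono'
    (Continuous.aestronglyMeasurable (by fun_prop)) (Eventually.of_forall fun t => ?_)
  rw [norm_mul, norm_mul, norm_of_nonneg hz.le, norm_of_nonneg (exp_pos _).le, norm_eq_abs,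
    abs_sinh, mul_assoc, mul_comm (sinh |t|), one_mul, ← cosh_abs t]
  gcongr
  exact (sinh_lt_cosh _).le

lemma integral_mul_sinh_mul_exp_neg_mul_cosh {z : ℝ} (hz : 0 < z) :
    ∫ t in Ioi (0 : ℝ), z * sinh t * exp (-z * cosh t) = exp (-z) := by
  have hlim : Tendsto (fun t => -exp (-z * cosh t)) atTop (𝓝 0) := by
    simpa using (tendsto_exp_neg_mul_cosh_mul_cosh_atTop 0 hz).neg
  have h := integral_Ioi_of_hasDerivAt_of_tendsto' (a := 0)
    (fun t _ => (hasDerivAt_exp_neg_mul_cosh z t).fun_neg.congr_deriv (neg_neg _))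
    (integrableOn_mul_sinh_mul_exp_neg_mul_cosh hz) hlim
  simpa using h

lemma exp_neg_le_mul_besselK_one {z : ℝ} (hz : 0 < z) : exp (-z) ≤ z * besselK 1 z := by
  rw [← integral_mul_sinh_mul_exp_neg_mul_cosh hz, besselK, ← integral_const_mul]
  refine integral_mono (integrableOn_mul_sinh_mul_exp_neg_mul_cosh hz)
    ((integrableOn_exp_neg_mul_cosh_mul_cosh (1 : ℕ) hz).const_mul z) fun t => ?_
  simp only [Nat.cast_one, one_mul]
  rw [mul_assoc, mul_comm (sinh t)]
  gcongr
  exact (sinh_lt_cosh t).le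

lemma mul_besselK_one_le_exp_neg_add {z : ℝ} (hz : 0 < z) :
    z * besselK 1 z ≤ exp (-z) + z := by
  have hsinh := integrableOn_mul_sinh_mul_exp_neg_mul_cosh hz
  have hexp := (integrableOn_exp_neg_Ioi 0).const_mul z
  suffices h : z * besselK 1 z ≤
      ∫ t in Ioi (0 : ℝ), (z * sinh t * exp (-z * cosh t) + z * exp (-t)) by
    rwa [integral_add hsinh hexp, integral_const_mul, integral_exp_neg_Ioi_zero, mul_one,
      integral_mul_sinh_mul_exp_neg_mul_cosh hz] at h
  rw [besselK, ← integral_const_mul]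
  refine integral_mono ((integrableOn_exp_neg_mul_cosh_mul_cosh (1 : ℕ) hz).const_mul z)
    (hsinh.add hexp) fun t => ?_
  have hle : exp (-z * cosh t) ≤ 1 := exp_le_one_iff.2 (by
    rw [neg_mul]; exact neg_nonpos.2 (mul_pos hz (cosh_pos t)).le)
  simp only [Nat.cast_one, one_mul]
  calc z * (exp (-z * cosh t) * cosh t)
      = z * sinh t * exp (-z * cosh t) + z * (exp (-z * cosh t) * exp (-t)) := by
        rw [← cosh_sub_sinh]; ring
    _ ≤ z * sinh t * exp (-z * cosh t) + z * (1 * exp (-t)) := by gcongr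
    _ = z * sinh t * exp (-z * cosh t) + z * exp (-t) := by rw [one_mul]

lemma tendsto_mul_besselK_one : Tendsto (fun z => z * besselK 1 z) (𝓝[>] 0) (𝓝 1) := by
  have hlower : Tendsto (fun z : ℝ => exp (-z)) (𝓝[>] 0) (𝓝 1) :=
    (Continuous.tendsto' (by fun_prop) 0 1 (by simp)).mono_left nhdsWithin_le_nhds
  have hupper := hlower.add (tendsto_id.mono_left nhdsWithin_le_nhds)
  rw [add_zero] at hupper
  exact tendsto_of_tendsto_of_tendsto_of_le_of_le' hlower hupper
    (eventually_mem_nhdsWithin.mono fun z => exp_neg_le_mul_besselK_one)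
    (eventually_mem_nhdsWithin.mono fun z => mul_besselK_one_le_exp_neg_add)

/-! ### Small-argument bounds -/

lemma le_of_hasDerivAt_le_of_tendsto_sub {f g f' g' : ℝ → ℝ} {a b : ℝ} (hab : a < b)
    (hf : ∀ x ∈ Ioc a b, HasDerivAt f (f' x) x) (hg : ∀ x ∈ Ioc a b, HasDerivAt g (g' x) x)
    (hle : ∀ x ∈ Ioc a b, f' x ≤ g' x)
    (hlim : Tendsto (fun x => g x - f x) (𝓝[>] a) (𝓝 0)) : f b ≤ g b := by
  have hderiv : ∀ x ∈ Ioc a b, HasDerivAt (fun x => g x - f x) (g' x - f' x) x :=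
    fun x hx => (hg x hx).sub (hf x hx)
  have hmono : MonotoneOn (fun x => g x - f x) (Ioc a b) :=
    monotoneOn_of_hasDerivWithinAt_nonneg (convex_Ioc a b)
      (fun x hx => (hderiv x hx).continuousAt.continuousWithinAt)
      (fun x hx => (hderiv x (interior_subset hx)).hasDerivWithinAt)
      (fun x hx => sub_nonneg.2 (hle x (interior_subset hx)))
  refine sub_nonneg.1 (le_of_tendsto hlim ?_)
  filter_upwards [Ioc_mem_nhdsGT hab] with x hx
  exact hmono hx ⟨hab, le_rfl⟩ hx.2

lemma hasDerivAt_besselKZeroLeading {z : ℝ} (hz : z ≠ 0) :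
    HasDerivAt besselKZeroLeading (-z⁻¹) z := by
  have hlog := ((hasDerivAt_id z).div_const 2).log (div_ne_zero hz two_ne_zero)
  refine (hlog.add_const eulerMascheroniConstant).neg.congr_deriv ?_
  simp only [id]
  field_simp

lemma hasDerivAt_sq_mul_besselKZeroLeading {z : ℝ} (hz : z ≠ 0) :
    HasDerivAt (fun z => z ^ 2 * besselKZeroLeading z) (2 * z * besselKZeroLeading z - z) z := by
  refine ((hasDerivAt_pow 2 z).mul (hasDerivAt_besselKZeroLeading hz)).congr_deriv ?_
  field_simp
  ring

lemma tendsto_sq_mul_besselKZeroLeading :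
    Tendsto (fun z => z ^ 2 * besselKZeroLeading z) (𝓝[>] 0) (𝓝 0) := by
  have hlog : Tendsto (fun z => log z * z ^ 2) (𝓝[>] 0) (𝓝 0) := by
    simpa using tendsto_log_mul_rpow_nhdsGT_zero two_pos
  have hsq : Tendsto (fun z : ℝ => z ^ 2 * (log 2 - eulerMascheroniConstant)) (𝓝[>] 0) (𝓝 0) :=
    (Continuous.tendsto' (by fun_prop) 0 0 (by simp)).mono_left nhdsWithin_le_nhds
  have hsub := hsq.sub hlog
  rw [sub_zero] at hsub
  refine hsub.congr' ?_
  filter_upwards [self_mem_nhdsWithin] with z hz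
  rw [besselKZeroLeading, log_div (ne_of_gt hz) two_ne_zero]
  ring

lemma one_add_le_besselKZeroLeading {z : ℝ} (hz : 0 < z) (hz_le : z ≤ 1 / 4) :
    1 + z ≤ besselKZeroLeading z := by
  have hlog : log (z / 2) ≤ -(3 * log 2) := by
    rw [← log_rpow two_pos, ← log_inv]
    exact log_le_log (by positivity) (by norm_num; linarith)
  rw [besselKZeroLeading]
  linarith [log_two_gt_d9, eulerMascheroniConstant_lt_two_thirds]

lemma mul_besselK_one_le_one {z : ℝ} (hz : 0 < z) : z * besselK 1 z ≤ 1 := by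
  refine le_of_hasDerivAt_le_of_tendsto_sub (f := fun z => z * besselK 1 z) (g := fun _ => 1) hz
    (fun x hx => hasDerivAt_mul_besselK_one hx.1) (fun x _ => hasDerivAt_const x 1)
    (fun x hx => neg_nonpos.2 (mul_nonneg hx.1.le (besselK_nonneg 0 x))) ?_
  simpa using tendsto_mul_besselK_one.const_sub 1

lemma one_sub_le_mul_besselK_one {z : ℝ} (hz : 0 < z) : 1 - z ≤ z * besselK 1 z :=
  (one_sub_le_exp_neg z).trans (exp_neg_le_mul_besselK_one hz)

lemma besselKZeroLeading_le_besselK_zero {z : ℝ} (hz : 0 < z) :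
    besselKZeroLeading z ≤ besselK 0 z := by
  refine le_of_hasDerivAt_le_of_tendsto_sub hz (fun x hx => hasDerivAt_besselKZeroLeading hx.1.ne')
    (fun x hx => hasDerivAt_besselK_zero hx.1) (fun x hx => ?_) tendsto_besselK_zero_sub_leading
  rw [neg_le_neg_iff, ← one_div, le_div_iff₀' hx.1]
  exact mul_besselK_one_le_one hx.1

lemma besselK_zero_le_leading_add_self {z : ℝ} (hz : 0 < z) :
    besselK 0 z ≤ besselKZeroLeading z + z := by
  refine le_of_hasDerivAt_le_of_tendsto_sub (g := fun z => besselKZeroLeading z + z) hz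
    (fun x hx => hasDerivAt_besselK_zero hx.1)
    (fun x hx => (hasDerivAt_besselKZeroLeading hx.1.ne').add (hasDerivAt_id x))
    (fun x hx => ?_) ?_
  · have hx0 := hx.1
    have : x⁻¹ - 1 ≤ besselK 1 x := by
      rw [← mul_le_mul_iff_right₀ hx0, mul_sub, mul_inv_cancel₀ hx0.ne', mul_one]
      exact one_sub_le_mul_besselK_one hx0
    linarith
  · have hid : Tendsto (fun z : ℝ => z) (𝓝[>] 0) (𝓝 0) := tendsto_id.mono_left nhdsWithin_le_nhds
    have hsub := hid.sub tendsto_besselK_zero_sub_leading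
    rw [sub_zero] at hsub
    exact hsub.congr fun z => by ring

lemma one_sub_sq_mul_leading_le_mul_besselK_one {z : ℝ} (hz : 0 < z) (hz_le : z ≤ 1 / 4) :
    1 - z ^ 2 * besselKZeroLeading z ≤ z * besselK 1 z := by
  refine le_of_hasDerivAt_le_of_tendsto_sub (f := fun z => 1 - z ^ 2 * besselKZeroLeading z)
    (g := fun z => z * besselK 1 z) hz
    (fun x hx => (hasDerivAt_sq_mul_besselKZeroLeading hx.1.ne').const_sub 1)
    (fun x hx => hasDerivAt_mul_besselK_one hx.1) (fun x hx => ?_) ?_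
  · have hK := besselK_zero_le_leading_add_self hx.1
    have hL := one_add_le_besselKZeroLeading hx.1 (hx.2.trans hz_le)
    linarith [mul_le_mul_of_nonneg_left (hK.trans (by linarith :
      _ ≤ 2 * besselKZeroLeading x - 1)) hx.1.le]
  · simpa using tendsto_mul_besselK_one.sub (tendsto_sq_mul_besselKZeroLeading.const_sub 1)

lemma besselK_zero_le_leading_add_sq_mul {z : ℝ} (hz : 0 < z) (hz_le : z ≤ 1 / 4) :
    besselK 0 z ≤ besselKZeroLeading z + z ^ 2 * besselKZeroLeading z := by
  refine le_of_hasDerivAt_le_of_tendsto_sub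
    (g := fun z => besselKZeroLeading z + z ^ 2 * besselKZeroLeading z) hz
    (fun x hx => hasDerivAt_besselK_zero hx.1)
    (fun x hx => (hasDerivAt_besselKZeroLeading hx.1.ne').add
      (hasDerivAt_sq_mul_besselKZeroLeading hx.1.ne')) (fun x hx => ?_) ?_
  · have hx0 := hx.1
    have hL := one_add_le_besselKZeroLeading hx0 (hx.2.trans hz_le)
    have hK : x⁻¹ - x * besselKZeroLeading x ≤ besselK 1 x := by
      rw [← mul_le_mul_iff_right₀ hx0, mul_sub, mul_inv_cancel₀ hx0.ne', ← mul_assoc, ← sq]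
      exact one_sub_sq_mul_leading_le_mul_besselK_one hx0 (hx.2.trans hz_le)
    have hxL : x * 1 ≤ x * besselKZeroLeading x := by
      gcongr
      linarith
    linarith
  · have hsub := tendsto_sq_mul_besselKZeroLeading.sub tendsto_besselK_zero_sub_leading
    rw [sub_zero] at hsub
    exact hsub.congr fun z => by ring

/-! ### Comparison of the eigenvalues -/

lemma abs_eigenvalue_numerator_le {δ a K L : ℝ} (hδ : 0 ≤ δ) (hδ_le : δ ≤ 1) (hL : 1 ≤ L)
    (ha : 0 ≤ a) (ha_le : a ≤ 1) (haL : 1 - δ * L ≤ a) (hK : L ≤ K) (hK_le : K ≤ L + δ * L) :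
    |2 * a * (K - a * L) + δ * K ^ 2| ≤ 8 * δ * L ^ 2 := by
  have hL0 : 0 ≤ L := zero_le_one.trans hL
  have hK0 : 0 ≤ K := hL0.trans hK
  have hδL : δ * L ≤ δ * L ^ 2 := by
    gcongr
    exact le_self_pow₀ hL two_ne_zero
  have hdiff_nonneg : 0 ≤ K - a * L := by linarith [mul_le_of_le_one_left hL0 ha_le]
  have hdiff_le : K - a * L ≤ 2 * δ * L ^ 2 := by
    linarith [mul_le_mul_of_nonneg_right haL hL0]
  have hK_le_two_mul : K ≤ 2 * L := by linarith [mul_le_of_le_one_left hL0 hδ_le]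
  rw [abs_of_nonneg (by positivity)]
  calc 2 * a * (K - a * L) + δ * K ^ 2
      ≤ 2 * 1 * (2 * δ * L ^ 2) + δ * (2 * L) ^ 2 := by gcongr
    _ = 8 * δ * L ^ 2 := by ring

lemma abs_eigenvalue_quotient_sub_le {δ a K L : ℝ} (hδ : 0 ≤ δ) (hδ_le : δ ≤ 1) (hL : 1 ≤ L)
    (ha : 1 / 2 ≤ a) (ha_le : a ≤ 1) (haL : 1 - δ * L ≤ a) (hK : L ≤ K)
    (hK_le : K ≤ L + δ * L) :
    |a ^ 2 / (2 * K * a + δ * K ^ 2 - a ^ 2) - 1 / (2 * L - 1)| ≤ 16 * δ := by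
  set D := 2 * K * a + δ * K ^ 2 - a ^ 2 with hD_def
  have hD : L / 2 ≤ D := by
    have hδK : 0 ≤ δ * K ^ 2 := by positivity
    have haK : 1 / 2 * L ≤ a * (2 * K - a) := by
      gcongr
      linarith
    linarith
  have hM : L ≤ 2 * L - 1 := by linarith
  have hD_pos : 0 < D := by linarith
  have hM_pos : 0 < 2 * L - 1 := by linarith
  have hDM : L / 2 * L ≤ D * (2 * L - 1) := by gcongr
  have hsub : a ^ 2 / D - 1 / (2 * L - 1) =
      -(2 * a * (K - a * L) + δ * K ^ 2) / (D * (2 * L - 1)) := by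
    rw [div_sub_div _ _ hD_pos.ne' hM_pos.ne', hD_def]
    ring
  rw [hsub, abs_div, abs_neg, abs_of_pos (mul_pos hD_pos hM_pos),
    div_le_iff₀ (mul_pos hD_pos hM_pos)]
  calc |2 * a * (K - a * L) + δ * K ^ 2| ≤ 8 * δ * L ^ 2 :=
        abs_eigenvalue_numerator_le hδ hδ_le hL (by linarith) ha_le haL hK hK_le
    _ = 16 * δ * (L / 2 * L) := by ring
    _ ≤ 16 * δ * (D * (2 * L - 1)) := by gcongr

/-- The tangential eigenvalue `λᵗ` of the slender-body PDE operator, as a function of the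
dimensionless wavenumber `z = πεk`. -/
noncomputable def stokesTangentialEigenvalue (z : ℝ) : ℝ :=
  4 * π * z * besselK 1 z ^ 2 /
    (2 * besselK 0 z * besselK 1 z + z * (besselK 0 z ^ 2 - besselK 1 z ^ 2))

/-- The tangential eigenvalue `λ^{SB,t}` of the Keller–Rubinow–Johnson approximation, as a function
of the dimensionless wavenumber `z = πεk`. -/
noncomputable def slenderBodyTangentialEigenvalue (z : ℝ) : ℝ :=
  -(4 * π) / (1 + 2 * log (z / 2) + 2 * eulerMascheroniConstant)

lemma stokesTangentialEigenvalue_eq {z : ℝ} (hz : z ≠ 0) :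
    stokesTangentialEigenvalue z =
      4 * π * ((z * besselK 1 z) ^ 2 /
        (2 * besselK 0 z * (z * besselK 1 z) + z ^ 2 * besselK 0 z ^ 2 -
          (z * besselK 1 z) ^ 2)) := by
  rw [stokesTangentialEigenvalue, ← mul_div_assoc, ← mul_div_mul_left _ _ hz]
  congr 1 <;> ring

lemma slenderBodyTangentialEigenvalue_eq (z : ℝ) :
    slenderBodyTangentialEigenvalue z = 4 * π * (1 / (2 * besselKZeroLeading z - 1)) := by
  rw [slenderBodyTangentialEigenvalue, mul_one_div, ← neg_div_neg_eq (4 * π), besselKZeroLeading]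
  ring_nf

theorem stokes_tangential_eigenvalue_difference_general {z : ℝ} (hz : 0 < z) (hz_le : z ≤ 1 / 4) :
    |stokesTangentialEigenvalue z - slenderBodyTangentialEigenvalue z| ≤ 64 * π * z ^ 2 := by
  have hquot := abs_eigenvalue_quotient_sub_le (sq_nonneg z)
    (pow_le_one₀ hz.le (by linarith)) (by linarith [one_add_le_besselKZeroLeading hz hz_le])
    (by linarith [one_sub_le_mul_besselK_one hz]) (mul_besselK_one_le_one hz)
    (one_sub_sq_mul_leading_le_mul_besselK_one hz hz_le) (besselKZeroLeading_le_besselK_zero hz)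
    (besselK_zero_le_leading_add_sq_mul hz hz_le)
  rw [stokesTangentialEigenvalue_eq hz.ne', slenderBodyTangentialEigenvalue_eq, ← mul_sub, abs_mul,
    abs_of_pos (by positivity : 0 < 4 * π)]
  linarith [mul_le_mul_of_nonneg_left hquot (by positivity : 0 ≤ 4 * π)]

theorem stokes_tangential_eigenvalue_difference :
    ∃ C : ℝ, 0 < C ∧ ∀ ε : ℝ, 0 < ε → ∀ k : ℕ, 1 ≤ k → π * ε * (k : ℝ) ≤ 1 / 4 →
      |4 * π ^ 2 * ε * (k : ℝ) * (besselK 1 (π * ε * (k : ℝ))) ^ 2 /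
            (2 * besselK 0 (π * ε * (k : ℝ)) * besselK 1 (π * ε * (k : ℝ)) +
              π * ε * (k : ℝ) *
                ((besselK 0 (π * ε * (k : ℝ))) ^ 2 - (besselK 1 (π * ε * (k : ℝ))) ^ 2)) -
          -(4 * π) /
            (1 + 2 * Real.log (π * ε * (k : ℝ) / 2) + 2 * Real.eulerMascheroniConstant)| ≤
        C * ε ^ 2 * (k : ℝ) ^ 2 := by
  refine ⟨64 * π ^ 3, by positivity, fun ε hε k hk hz => ?_⟩
  have h := stokes_tangential_eigenvalue_difference_general (z := π * ε * k) (by positivity) hz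
  unfold stokesTangentialEigenvalue slenderBodyTangentialEigenvalue at h
  convert h using 1 <;> ring_nf
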